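/- arXiv:2509.06549 — 2 statements merged into one kernel-verified Lean document; each statement's English description precedes it below -/
import Mathlib

section
/- Let χ be a probability distribution on a finite set A. There exists a constant C > 0, depending only on χ, such that for every n ≥ 1 and every δ ≥ 0, the probability that a sample k drawn from the product distribution χ^n lies in the core set C^{n,δ}_χ satisfies Pr_{k ← χ^n}[k ∈ C^{n,δ}_χ] ≥ 1/2 − C/√n. -/
open scoped Classical

namespace CoreMass

noncomputable def q (x : ℝ) : ℝ := ∫ t in (0:ℝ)..1, (1 - t) * Real.cos (t * x)

noncomputable def k (x : ℝ) : ℝ := ∫ t in (0:ℝ)..1, (1 - t ^ 2) * Real.cos (t * x)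

noncomputable def F (x : ℝ) : ℝ := ∫ y in (0:ℝ)..x, k y

noncomputable def h (x : ℝ) : ℝ :=
  ∫ t in (0:ℝ)..1, (1 - t) * (1 + Real.cos (Real.pi * t)) * Real.cos (t * x)

lemma q_eq (x : ℝ) : x ^ 2 * q x = 1 - Real.cos x := by
  have hd : ∀ t ∈ Set.uIcc (0:ℝ) 1, HasDerivAt
      (fun t : ℝ => (1 - t) * (x * Real.sin (t * x)) - Real.cos (t * x))
      (x ^ 2 * ((1 - t) * Real.cos (t * x))) t := by
    intro t _
    have h1 : HasDerivAt (fun t : ℝ => t * x) x t := by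
      simpa using (hasDerivAt_id t).mul_const x
    have h2 := (((hasDerivAt_id t).const_sub 1).mul (h1.sin.const_mul x)).sub h1.cos
    refine h2.congr_deriv ?_
    simp; ring
  have := intervalIntegral.integral_eq_sub_of_hasDerivAt hd
    (Continuous.intervalIntegrable (by fun_prop) _ _)
  rw [intervalIntegral.integral_const_mul] at this
  rw [q, this]; simp; ring

lemma k_eq (x : ℝ) : x ^ 3 * k x = 2 * Real.sin x - 2 * x * Real.cos x := by
  have hd : ∀ t ∈ Set.uIcc (0:ℝ) 1, HasDerivAt
      (fun t : ℝ => (1 - t ^ 2) * (x ^ 2 * Real.sin (t * x)) - (2 * t) * (x * Real.cos (t * x))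
        + 2 * Real.sin (t * x))
      (x ^ 3 * ((1 - t ^ 2) * Real.cos (t * x))) t := by
    intro t _
    have h1 : HasDerivAt (fun t : ℝ => t * x) x t := by
      simpa using (hasDerivAt_id t).mul_const x
    have h2 := (((((hasDerivAt_id t).pow 2).const_sub 1).mul (h1.sin.const_mul (x ^ 2))).sub
      (((hasDerivAt_id t).const_mul 2).mul (h1.cos.const_mul x))).add (h1.sin.const_mul 2)
    refine h2.congr_deriv ?_
    simp; ring
  have := intervalIntegral.integral_eq_sub_of_hasDerivAt hd
    (Continuous.intervalIntegrable (by fun_prop) _ _)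
  rw [intervalIntegral.integral_const_mul] at this
  rw [k, this]; simp; ring

lemma q_nonneg (x : ℝ) : 0 ≤ q x := by
  by_cases hx : x = 0
  · subst hx
    unfold q
    apply intervalIntegral.integral_nonneg (by norm_num)
    intro t ht
    simp at ht ⊢
    linarith
  · have h1 := q_eq x
    have h2 := Real.cos_le_one x
    have h3 : 0 < x ^ 2 := by positivity
    by_contra hc
    push Not at hc
    nlinarith

lemma q_lower (x B : ℝ) (hB : 0 < B) (hx : x ^ 2 ≤ B) : (1 - Real.cos x) / B ≤ q x := by
  rw [div_le_iff₀ hB, ← q_eq]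
  nlinarith [q_nonneg x]

lemma h_eq (x : ℝ) : h x = q x + (q (x - Real.pi) + q (x + Real.pi)) / 2 := by
  unfold h q
  rw [← intervalIntegral.integral_add, ← intervalIntegral.integral_div,
    ← intervalIntegral.integral_add]
  · congr 1
    ext t
    rw [show t * (x - Real.pi) = t * x - Real.pi * t by ring,
      show t * (x + Real.pi) = t * x + Real.pi * t by ring, Real.cos_sub, Real.cos_add]
    ring
  all_goals exact Continuous.intervalIntegrable (by fun_prop) _ _

lemma h_lower (x : ℝ) : 1 / (x ^ 2 + Real.pi ^ 2) ≤ h x := by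
  have hp := Real.pi_pos
  have hB : 0 < 2 * (x ^ 2 + Real.pi ^ 2) := by positivity
  have h1 := q_lower x _ hB (by nlinarith [sq_nonneg x])
  have h2 := q_lower (x - Real.pi) _ hB (by nlinarith [sq_nonneg (x + Real.pi)])
  have h3 := q_lower (x + Real.pi) _ hB (by nlinarith [sq_nonneg (x - Real.pi)])
  rw [Real.cos_sub_pi] at h2
  rw [Real.cos_add_pi] at h3
  rw [h_eq]
  have : 1 / (x ^ 2 + Real.pi ^ 2) = (1 - Real.cos x) / (2 * (x ^ 2 + Real.pi ^ 2)) +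
    ((1 - -Real.cos x) / (2 * (x ^ 2 + Real.pi ^ 2)) +
      (1 - -Real.cos x) / (2 * (x ^ 2 + Real.pi ^ 2))) / 2 := by
    field_simp; ring
  rw [this]; gcongr

lemma h_neg (x : ℝ) : h (-x) = h x := by simp [h]

lemma k_neg (x : ℝ) : k (-x) = k x := by simp [k]

lemma F_neg (x : ℝ) : F (-x) = - F x := by
  unfold F
  have := intervalIntegral.integral_comp_neg (a := 0) (b := x) (fun y => k y)
  simp only [k_neg, neg_zero] at this
  rw [this, intervalIntegral.integral_symm]

lemma k_cont : Continuous k := by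
  unfold k
  apply intervalIntegral.continuous_parametric_intervalIntegral_of_continuous'
  fun_prop

lemma F_deriv (x : ℝ) : HasDerivAt F (k x) x :=
  intervalIntegral.integral_hasDerivAt_right (k_cont.intervalIntegrable _ _)
    (k_cont.stronglyMeasurableAtFilter _ _) k_cont.continuousAt

lemma abs_k_le (x : ℝ) : |k x| ≤ 1 := by
  have := intervalIntegral.norm_integral_le_of_norm_le_const (a := (0:ℝ)) (b := 1) (C := 1)
    (f := fun t => (1 - t ^ 2) * Real.cos (t * x)) (by
      intro t ht
      rw [Set.uIoc_of_le (by norm_num)] at ht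
      obtain ⟨h0, h1⟩ := ht
      rw [norm_mul, Real.norm_eq_abs, Real.norm_eq_abs]
      have h2 := Real.abs_cos_le_one (t * x)
      have h3 : |1 - t ^ 2| ≤ 1 := by rw [abs_le]; constructor <;> nlinarith
      nlinarith [abs_nonneg (1 - t ^ 2), abs_nonneg (Real.cos (t * x))])
  simpa [k] using this

lemma abs_F_le (x : ℝ) : |F x| ≤ |x| := by
  have := intervalIntegral.norm_integral_le_of_norm_le_const (a := (0:ℝ)) (b := x) (C := 1)
    (f := k) (fun t _ => abs_k_le t)
  simpa [F] using this

lemma F_pi_half : 0 ≤ F (Real.pi / 2) := by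
  have hp := Real.pi_pos
  unfold F
  apply intervalIntegral.integral_nonneg (by positivity)
  intro y hy
  unfold k
  apply intervalIntegral.integral_nonneg (by positivity)
  intro t ht
  obtain ⟨h0, h1⟩ := ht
  obtain ⟨h2, h3⟩ := hy
  apply mul_nonneg (by nlinarith)
  apply Real.cos_nonneg_of_mem_Icc
  constructor <;> nlinarith

lemma G_deriv (c x : ℝ) (hx : 0 < x) :
    HasDerivAt (fun x => F x + (2 * Real.sin x + c) / x ^ 2) (-(2 * Real.sin x + 2 * c) / x ^ 3) x := by
  have h1 := (F_deriv x).add ((((Real.hasDerivAt_sin x).const_mul 2).add_const c).div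
    ((hasDerivAt_id x).pow 2) (by simpa using hx.ne'))
  refine h1.congr_deriv ?_
  have := k_eq x
  have hk : k x = (2 * Real.sin x - 2 * x * Real.cos x) / x ^ 3 := by
    field_simp; linarith
  rw [hk]
  simp
  field_simp
  ring

lemma exists_L : ∃ L : ℝ, 0 < L ∧ ∀ x, 0 < x → |F x - L| ≤ 3 / x ^ 2 := by
  have hp := Real.pi_pos
  set A : ℝ → ℝ := fun x => F x + (2 * Real.sin x + (-1)) / x ^ 2 with hA
  set B : ℝ → ℝ := fun x => F x + (2 * Real.sin x + 1) / x ^ 2 with hB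
  have hAm : MonotoneOn A (Set.Ioi 0) := by
    apply monotoneOn_of_deriv_nonneg (convex_Ioi 0)
    · exact fun x hx => (G_deriv (-1) x hx).continuousAt.continuousWithinAt
    · rw [interior_Ioi]
      exact fun x hx => (G_deriv (-1) x hx).differentiableAt.differentiableWithinAt
    · rw [interior_Ioi]
      intro x hx
      rw [(G_deriv (-1) x hx).deriv]
      have : 0 < x := hx
      apply div_nonneg _ (by positivity)
      linarith [Real.sin_le_one x]
  have hBm : AntitoneOn B (Set.Ioi 0) := by
    apply antitoneOn_of_deriv_nonpos (convex_Ioi 0)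
    · exact fun x hx => (G_deriv 1 x hx).continuousAt.continuousWithinAt
    · rw [interior_Ioi]
      exact fun x hx => (G_deriv 1 x hx).differentiableAt.differentiableWithinAt
    · rw [interior_Ioi]
      intro x hx
      rw [(G_deriv 1 x hx).deriv]
      have : 0 < x := hx
      apply div_nonpos_of_nonpos_of_nonneg _ (by positivity)
      linarith [Real.neg_one_le_sin x]
  have hAB : ∀ x y, 0 < x → 0 < y → A x ≤ B y := by
    intro x y hx hy
    have hz : 0 < max x y := lt_max_of_lt_left hx
    calc A x ≤ A (max x y) := hAm hx hz (le_max_left _ _)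
      _ ≤ B (max x y) := by simp only [hA, hB]; gcongr; norm_num
      _ ≤ B y := hBm hy hz (le_max_right _ _)
  have hbdd : BddAbove (A '' Set.Ioi 0) := by
    refine ⟨B 1, ?_⟩
    rintro _ ⟨x, hx, rfl⟩
    exact hAB x 1 hx one_pos
  refine ⟨sSup (A '' Set.Ioi 0), ?_, ?_⟩
  · have h1 : A (Real.pi / 2) ≤ sSup (A '' Set.Ioi 0) :=
      le_csSup hbdd ⟨_, by simpa using hp, rfl⟩
    have h2 : 0 < A (Real.pi / 2) := by
      simp only [hA, Real.sin_pi_div_two]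
      have := F_pi_half
      have : 0 < (2 * 1 + (-1 : ℝ)) / (Real.pi / 2) ^ 2 := by norm_num; positivity
      linarith
    linarith
  · intro x hx
    have h1 : A x ≤ sSup (A '' Set.Ioi 0) := le_csSup hbdd ⟨x, hx, rfl⟩
    have h2 : sSup (A '' Set.Ioi 0) ≤ B x := by
      refine csSup_le (Set.Nonempty.image A ⟨x, hx⟩) ?_
      rintro _ ⟨y, hy, rfl⟩
      exact hAB y x hy hx
    have h3 : -3 / x ^ 2 ≤ (2 * Real.sin x + (-1)) / x ^ 2 := by
      gcongr; linarith [Real.neg_one_le_sin x]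
    have h4 : (2 * Real.sin x + 1) / x ^ 2 ≤ 3 / x ^ 2 := by
      gcongr; linarith [Real.sin_le_one x]
    simp only [hA, hB] at h1 h2
    rw [neg_div] at h3
    rw [abs_le]; constructor <;> linarith

lemma exists_minorant : ∃ L C : ℝ, 0 < L ∧ 0 < C ∧ ∀ x, F x - C * h x ≤ L * (if 0 ≤ x then 1 else -1) := by
  obtain ⟨L, hL, hF⟩ := exists_L
  have hp := Real.pi_pos
  refine ⟨L, (4 + L) * (1 + Real.pi ^ 2), hL, by positivity, ?_⟩
  have key : ∀ x, 0 < x → |F x - L| ≤ (4 + L) * (1 + Real.pi ^ 2) * h x := by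
    intro x hx
    have hh := h_lower x
    rw [mul_assoc]
    by_cases h1 : 1 ≤ x
    · have : 1 / x ^ 2 ≤ (1 + Real.pi ^ 2) * h x := by
        calc 1 / x ^ 2 ≤ (1 + Real.pi ^ 2) * (1 / (x ^ 2 + Real.pi ^ 2)) := by
              rw [mul_one_div, div_le_div_iff₀ (by positivity) (by positivity)]
              nlinarith [mul_nonneg (sq_nonneg Real.pi) (show (0:ℝ) ≤ x ^ 2 - 1 by nlinarith)]
          _ ≤ _ := by gcongr
      calc |F x - L| ≤ 3 / x ^ 2 := hF x hx
        _ = 3 * (1 / x ^ 2) := by ring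
        _ ≤ (4 + L) * (1 / x ^ 2) := by gcongr; linarith
        _ ≤ _ := by gcongr
    · push Not at h1
      have : 1 ≤ (1 + Real.pi ^ 2) * h x := by
        calc 1 ≤ (1 + Real.pi ^ 2) * (1 / (x ^ 2 + Real.pi ^ 2)) := by
              rw [mul_one_div, le_div_iff₀ (by positivity)]
              nlinarith
          _ ≤ _ := by gcongr
      have h2 := abs_F_le x
      rw [abs_of_pos hx] at h2
      calc |F x - L| ≤ |F x| + |L| := abs_sub _ _
        _ ≤ (4 + L) * 1 := by rw [abs_of_pos hL]; linarith
        _ ≤ _ := by gcongr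
  intro x
  rcases lt_trichotomy x 0 with hx | hx | hx
  · have := key (-x) (by linarith)
    rw [F_neg, h_neg] at this
    rw [if_neg (not_le.mpr hx)]
    have := (abs_le.mp this).1
    linarith [(abs_le.mp (key (-x) (by linarith))).2, F_neg x, h_neg x]
  · subst hx
    have h1 : F 0 = 0 := by simp [F]
    have h2 : 0 ≤ h 0 := le_trans (by positivity) (h_lower 0)
    rw [h1, if_pos le_rfl]
    have : 0 ≤ (4 + L) * (1 + Real.pi ^ 2) * h 0 := by positivity
    linarith
  · rw [if_pos hx.le]
    linarith [(abs_le.mp (key x hx)).2]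

lemma F_eq (x : ℝ) : F x = ∫ t in (0:ℝ)..1, (1 - t ^ 2) * ∫ y in (0:ℝ)..x, Real.cos (t * y) := by
  unfold F k
  rw [MeasureTheory.intervalIntegral_intervalIntegral_swap]
  · simp only [intervalIntegral.integral_const_mul]
  · apply MeasureTheory.IntegrableOn.mono_set (t := Set.uIcc 0 x ×ˢ Set.uIcc 0 1)
    · apply ContinuousOn.integrableOn_compact (isCompact_uIcc.prod isCompact_uIcc)
      apply Continuous.continuousOn
      fun_prop
    · exact Set.prod_mono Set.uIoc_subset_uIcc Set.uIoc_subset_uIcc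

lemma int_cos (t x : ℝ) (ht : t ≠ 0) : ∫ y in (0:ℝ)..x, Real.cos (t * y) = Real.sin (t * x) / t := by
  rw [intervalIntegral.integral_comp_mul_left (fun y => Real.cos y) ht]
  simp; field_simp

lemma abs_im_pow_le (z : ℂ) (n : ℕ) : |(z ^ (n + 1)).im| ≤ (n + 1) * (|z.im| * ‖z‖ ^ n) := by
  induction n with
  | zero => simp
  | succ n ih =>
    rw [pow_succ, Complex.mul_im]
    have h1 : |(z ^ (n + 1)).re| ≤ ‖z‖ ^ (n + 1) := by
      rw [← norm_pow]; exact Complex.abs_re_le_norm _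
    have h2 := Complex.abs_re_le_norm z
    calc _ ≤ |(z ^ (n + 1)).re| * |z.im| + |(z ^ (n + 1)).im| * |z.re| := by
          rw [← abs_mul, ← abs_mul]; exact abs_add_le _ _
      _ ≤ ‖z‖ ^ (n + 1) * |z.im| + ((n + 1) * (|z.im| * ‖z‖ ^ n)) * ‖z‖ := by gcongr
      _ = _ := by push_cast; ring

end CoreMass

namespace CoreMass

lemma gauss_le (b : ℝ) (hb : 0 < b) :
    ∫ t in (0:ℝ)..1, Real.exp (-b * t ^ 2) ≤ Real.sqrt (Real.pi / b) := by
  rw [intervalIntegral.integral_of_le zero_le_one, ← integral_gaussian]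
  exact MeasureTheory.setIntegral_le_integral (integrable_exp_neg_mul_sq hb)
    (Filter.Eventually.of_forall fun t => (Real.exp_pos _).le)

noncomputable def phi {A : Type*} [Fintype A] (P X : A → ℝ) (t : ℝ) : ℂ :=
  ∑ x, (P x : ℂ) * Complex.exp (((t * X x : ℝ) : ℂ) * Complex.I)

section
variable {A : Type*} [Fintype A] (P X : A → ℝ)

lemma phi_re (t : ℝ) : (phi P X t).re = ∑ x, P x * Real.cos (t * X x) := by
  unfold phi
  rw [Complex.re_sum]
  refine Finset.sum_congr rfl fun x _ => ?_
  rw [Complex.re_ofReal_mul, Complex.exp_ofReal_mul_I_re]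

lemma phi_im (t : ℝ) : (phi P X t).im = ∑ x, P x * Real.sin (t * X x) := by
  unfold phi
  rw [Complex.im_sum]
  refine Finset.sum_congr rfl fun x _ => ?_
  rw [Complex.im_ofReal_mul, Complex.exp_ofReal_mul_I_im]

lemma phi_pow (t : ℝ) (n : ℕ) : (phi P X t) ^ n =
    phi (fun a : Fin n → A => ∏ i, P (a i)) (fun a => ∑ i, X (a i)) t := by
  unfold phi
  rw [Fintype.sum_pow]
  refine Finset.sum_congr rfl fun a _ => ?_
  rw [Finset.prod_mul_distrib, ← Complex.exp_sum]
  push_cast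
  rw [← Finset.sum_mul, ← Finset.mul_sum]

lemma sin_sub_le (u : ℝ) (hu : |u| ≤ 1) : |Real.sin u - u| ≤ |u| ^ 3 / 4 := by
  have h1 := Real.sin_bound hu
  have h0 := abs_nonneg u
  have h2 : |u| ^ 5 ≤ |u| ^ 3 := pow_le_pow_of_le_one h0 hu (by norm_num)
  have h3 : 0 ≤ |u| ^ 3 := by positivity
  calc |Real.sin u - u| = |(Real.sin u - (u - u ^ 3 / 6)) + (- (u ^ 3 / 6))| := by ring_nf
    _ ≤ |Real.sin u - (u - u ^ 3 / 6)| + |- (u ^ 3 / 6)| := abs_add_le _ _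
    _ = |Real.sin u - (u - u ^ 3 / 6)| + |u| ^ 3 / 6 := by
        rw [abs_neg, abs_div, abs_pow]; norm_num
    _ ≤ _ := by linarith

lemma cos_le (u : ℝ) (hu : |u| ≤ 1) : Real.cos u ≤ 1 - u ^ 2 / 4 := by
  have h1 := (abs_le.mp (Real.cos_bound hu)).2
  have h0 := abs_nonneg u
  have h2 : |u| ^ 4 ≤ |u| ^ 2 := pow_le_pow_of_le_one h0 hu (by norm_num)
  rw [sq_abs] at h2
  nlinarith [sq_nonneg u]

lemma phi_im_le (hpos : ∀ a, 0 < P a) (hX : ∀ a, |X a| ≤ 1 / 2)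
    (hmean : ∑ a, P a * X a = 0) (t : ℝ) (h0 : 0 ≤ t) (h1 : t ≤ 1) :
    |(phi P X t).im| ≤ t ^ 3 * ((∑ a, P a * X a ^ 2) / 8) := by
  have : (phi P X t).im = ∑ x, P x * (Real.sin (t * X x) - t * X x) := by
    rw [phi_im]
    simp only [mul_sub, Finset.sum_sub_distrib]
    have : ∑ x, P x * (t * X x) = t * ∑ x, P x * X x := by
      rw [Finset.mul_sum]; exact Finset.sum_congr rfl fun x _ => by ring
    rw [this, hmean]; ring
  rw [this, Finset.sum_div, Finset.mul_sum]
  refine (Finset.abs_sum_le_sum_abs _ _).trans (Finset.sum_le_sum fun x _ => ?_)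
  rw [abs_mul, abs_of_pos (hpos x)]
  have hx := hX x
  have hx0 := abs_nonneg (X x)
  have hu : |t * X x| = t * |X x| := by rw [abs_mul, abs_of_nonneg h0]
  have h2 := sin_sub_le (t * X x) (by rw [hu]; nlinarith)
  have h3 : |t * X x| ^ 3 / 4 ≤ t ^ 3 * (X x ^ 2 / 8) := by
    rw [hu, mul_pow, mul_div_assoc]
    refine mul_le_mul_of_nonneg_left ?_ (by positivity)
    rw [← sq_abs (X x)]
    nlinarith [sq_nonneg |X x|]
  calc P x * |Real.sin (t * X x) - t * X x| ≤ P x * (t ^ 3 * (X x ^ 2 / 8)) := by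
        gcongr
        · exact (hpos x).le
        · exact h2.trans h3
    _ = _ := by ring

lemma phi_norm_le (hpos : ∀ a, 0 < P a) (hsum : ∑ a, P a = 1) (hX : ∀ a, |X a| ≤ 1 / 2)
    (hmean : ∑ a, P a * X a = 0) (t : ℝ) (h0 : 0 ≤ t) (h1 : t ≤ 1) :
    ‖phi P X t‖ ≤ Real.exp (-((∑ a, P a * X a ^ 2) / 8) * t ^ 2) := by
  have him := phi_im_le P X hpos hX hmean t h0 h1
  set V := ∑ a, P a * X a ^ 2 with hV
  have hV0 : 0 ≤ V := Finset.sum_nonneg fun a _ => mul_nonneg (hpos a).le (sq_nonneg _)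
  have hu : ∀ x, |t * X x| ≤ 1 := by
    intro x
    rw [abs_mul, abs_of_nonneg h0]
    nlinarith [hX x, abs_nonneg (X x)]
  have hre : |(phi P X t).re| ≤ 1 - t ^ 2 * V / 4 := by
    rw [phi_re, abs_of_nonneg]
    · calc ∑ x, P x * Real.cos (t * X x) ≤ ∑ x, (P x - t ^ 2 / 4 * (P x * X x ^ 2)) := by
            refine Finset.sum_le_sum fun x _ => ?_
            nlinarith [cos_le _ (hu x), hpos x]
        _ = _ := by
            rw [Finset.sum_sub_distrib, hsum, ← Finset.mul_sum]; ring
    · refine Finset.sum_nonneg fun x _ => mul_nonneg (hpos x).le ?_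
      exact Real.cos_nonneg_of_mem_Icc ⟨by linarith [(abs_le.mp (hu x)).1, Real.pi_gt_three],
        by linarith [(abs_le.mp (hu x)).2, Real.pi_gt_three]⟩
  have h3 : t ^ 3 * (V / 8) ≤ t ^ 2 * (V / 8) := by
    have : t ^ 3 ≤ t ^ 2 := pow_le_pow_of_le_one h0 h1 (by norm_num)
    gcongr
  have := Complex.norm_le_abs_re_add_abs_im (phi P X t)
  have h4 := Real.add_one_le_exp (-(V / 8) * t ^ 2)
  linarith

lemma phi_cont : Continuous (phi P X) := by
  unfold phi; fun_prop

lemma main_bound (hpos : ∀ a, 0 < P a) (hsum : ∑ a, P a = 1) (hX : ∀ a, |X a| ≤ 1 / 2)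
    (hmean : ∑ a, P a * X a = 0) (c : ℝ) (hc : c = (∑ a, P a * X a ^ 2) / 8) (hc0 : 0 < c)
    (n : ℕ) (hn : 1 ≤ n) :
    |∑ a : Fin n → A, (∏ i, P (a i)) * F (∑ i, X (a i))|
        ≤ 2 * Real.exp c * Real.sqrt (Real.pi / (c * n / 2)) ∧
    |∑ a : Fin n → A, (∏ i, P (a i)) * h (∑ i, X (a i))|
        ≤ 2 * Real.exp c * Real.sqrt (Real.pi / (c * n / 2)) := by
  have hn0 : (0:ℝ) < n := by exact_mod_cast hn
  have hb : 0 < c * n / 2 := by positivity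
  have hec : 1 ≤ Real.exp c := Real.one_le_exp hc0.le
  have hint : ∫ t in (0:ℝ)..1, 2 * Real.exp c * Real.exp (-(c * n / 2) * t ^ 2) ≤
      2 * Real.exp c * Real.sqrt (Real.pi / (c * n / 2)) := by
    rw [intervalIntegral.integral_const_mul]
    have := gauss_le _ hb
    gcongr
  have hgi : IntervalIntegrable (fun t => 2 * Real.exp c * Real.exp (-(c * n / 2) * t ^ 2))
      MeasureTheory.volume 0 1 := Continuous.intervalIntegrable (by fun_prop) _ _
  constructor
  · have hE : ∑ a : Fin n → A, (∏ i, P (a i)) * F (∑ i, X (a i)) =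
        ∫ t in (0:ℝ)..1, ∑ a : Fin n → A, (∏ i, P (a i)) *
          ((1 - t ^ 2) * ∫ y in (0:ℝ)..(∑ i, X (a i)), Real.cos (t * y)) := by
      rw [intervalIntegral.integral_finsetSum]
      · refine Finset.sum_congr rfl fun a _ => ?_
        rw [F_eq, intervalIntegral.integral_const_mul]
      · intro a _
        apply Continuous.intervalIntegrable
        have : Continuous fun t : ℝ => ∫ y in (0:ℝ)..(∑ i, X (a i)), Real.cos (t * y) := by
          apply intervalIntegral.continuous_parametric_intervalIntegral_of_continuous'
          fun_prop
        fun_prop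
    rw [hE, ← Real.norm_eq_abs]
    refine (intervalIntegral.norm_integral_le_of_norm_le zero_le_one
      (Filter.Eventually.of_forall ?_) hgi).trans hint
    intro t ht
    obtain ⟨h0, h1⟩ := ht
    have heq : ∑ a : Fin n → A, (∏ i, P (a i)) *
          ((1 - t ^ 2) * ∫ y in (0:ℝ)..(∑ i, X (a i)), Real.cos (t * y)) =
        (1 - t ^ 2) * (((phi P X t) ^ n).im / t) := by
      rw [phi_pow, phi_im, Finset.sum_div, Finset.mul_sum]
      refine Finset.sum_congr rfl fun a _ => ?_
      rw [int_cos _ _ h0.ne']; ring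
    rw [heq, Real.norm_eq_abs, abs_mul, abs_div, abs_of_pos h0]
    obtain ⟨m, rfl⟩ : ∃ m, n = m + 1 := ⟨n - 1, by omega⟩
    have h2 := abs_im_pow_le (phi P X t) m
    have h3 := phi_im_le P X hpos hX hmean t h0.le h1
    have h4 := phi_norm_le P X hpos hsum hX hmean t h0.le h1
    rw [← hc] at h3 h4
    have h5 : |1 - t ^ 2| ≤ 1 := by rw [abs_le]; constructor <;> nlinarith
    have h6 : |((phi P X t) ^ (m + 1)).im| / t ≤
        (m + 1) * (t ^ 2 * c * Real.exp (-c * t ^ 2) ^ m) := by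
      rw [div_le_iff₀ h0]
      calc _ ≤ (m + 1) * (|(phi P X t).im| * ‖phi P X t‖ ^ m) := h2
        _ ≤ (m + 1) * ((t ^ 3 * c) * Real.exp (-c * t ^ 2) ^ m) := by gcongr
        _ = _ := by ring
    have h7 : Real.exp (-c * t ^ 2) ^ m ≤ Real.exp c * Real.exp (-(c * (m + 1) * t ^ 2)) := by
      rw [← Real.exp_nat_mul, ← Real.exp_add]
      apply Real.exp_le_exp.mpr
      nlinarith [mul_le_mul_of_nonneg_left (show t ^ 2 ≤ 1 by nlinarith) hc0.le]
    set y := c * (m + 1) * t ^ 2 with hy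
    have hy0 : 0 ≤ y := by positivity
    have h8 : y * Real.exp (-y) ≤ 2 * Real.exp (-(y / 2)) := by
      have e1 : Real.exp (-y) = Real.exp (-(y / 2)) * Real.exp (-(y / 2)) := by
        rw [← Real.exp_add]; ring_nf
      have e2 := Real.add_one_le_exp (y / 2)
      have e3 : Real.exp (y / 2) * Real.exp (-(y / 2)) = 1 := by rw [← Real.exp_add]; simp
      have e4 := Real.exp_pos (-(y / 2))
      have e5 : y * Real.exp (-(y / 2)) ≤ 2 := by nlinarith
      rw [e1, ← mul_assoc]
      gcongr
    calc |1 - t ^ 2| * (|((phi P X t) ^ (m + 1)).im| / t)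
        ≤ 1 * ((m + 1) * (t ^ 2 * c * (Real.exp c * Real.exp (-y)))) := by
          apply mul_le_mul h5 _ (by positivity) zero_le_one
          refine h6.trans ?_
          gcongr
      _ = Real.exp c * (y * Real.exp (-y)) := by rw [hy]; ring
      _ ≤ Real.exp c * (2 * Real.exp (-(y / 2))) := by gcongr
      _ = _ := by rw [hy]; push_cast; ring_nf
  · have hE : ∑ a : Fin n → A, (∏ i, P (a i)) * h (∑ i, X (a i)) =
        ∫ t in (0:ℝ)..1, ∑ a : Fin n → A, (∏ i, P (a i)) *
          ((1 - t) * (1 + Real.cos (Real.pi * t)) * Real.cos (t * (∑ i, X (a i)))) := by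
      rw [intervalIntegral.integral_finsetSum]
      · refine Finset.sum_congr rfl fun a _ => ?_
        rw [h, intervalIntegral.integral_const_mul]
      · intro a _
        apply Continuous.intervalIntegrable
        fun_prop
    rw [hE, ← Real.norm_eq_abs]
    refine (intervalIntegral.norm_integral_le_of_norm_le zero_le_one
      (Filter.Eventually.of_forall ?_) hgi).trans hint
    intro t ht
    obtain ⟨h0, h1⟩ := ht
    have heq : ∑ a : Fin n → A, (∏ i, P (a i)) *
          ((1 - t) * (1 + Real.cos (Real.pi * t)) * Real.cos (t * (∑ i, X (a i)))) =
        ((1 - t) * (1 + Real.cos (Real.pi * t))) * ((phi P X t) ^ n).re := by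
      rw [phi_pow, phi_re, Finset.mul_sum]
      exact Finset.sum_congr rfl fun a _ => by ring
    rw [heq, Real.norm_eq_abs, abs_mul]
    have h4 := phi_norm_le P X hpos hsum hX hmean t h0.le h1
    rw [← hc] at h4
    have h5 : |(1 - t) * (1 + Real.cos (Real.pi * t))| ≤ 2 := by
      have a1 := Real.cos_le_one (Real.pi * t)
      have a2 := Real.neg_one_le_cos (Real.pi * t)
      rw [abs_le]; constructor <;> nlinarith
    have h6 : |((phi P X t) ^ n).re| ≤ Real.exp (-(c * n / 2) * t ^ 2) := by
      calc _ ≤ ‖(phi P X t) ^ n‖ := Complex.abs_re_le_norm _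
        _ = ‖phi P X t‖ ^ n := norm_pow _ _
        _ ≤ Real.exp (-c * t ^ 2) ^ n := by gcongr
        _ ≤ _ := by
          rw [← Real.exp_nat_mul]
          apply Real.exp_le_exp.mpr
          have : 0 ≤ c * n * t ^ 2 := by positivity
          linarith
    calc _ ≤ 2 * Real.exp (-(c * n / 2) * t ^ 2) := by gcongr
      _ ≤ _ := by gcongr; linarith

end

lemma abstract {A : Type*} [Fintype A] (P X : A → ℝ) (hpos : ∀ a, 0 < P a)
    (hsum : ∑ a, P a = 1) (hX : ∀ a, |X a| ≤ 1 / 2) (hmean : ∑ a, P a * X a = 0) :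
    ∃ C > (0:ℝ), ∀ n : ℕ, 1 ≤ n → 1 / 2 - C / Real.sqrt n ≤
      ∑ a : Fin n → A, if 0 ≤ ∑ i, X (a i) then ∏ i, P (a i) else 0 := by
  have htot : ∀ n : ℕ, ∑ a : Fin n → A, ∏ i, P (a i) = 1 := by
    intro n; rw [← Fintype.sum_pow, hsum, one_pow]
  have hV0 : 0 ≤ ∑ a, P a * X a ^ 2 :=
    Finset.sum_nonneg fun a _ => mul_nonneg (hpos a).le (sq_nonneg _)
  rcases hV0.eq_or_lt with hV | hV
  · have hz : ∀ a, X a = 0 := by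
      intro a
      have := (Finset.sum_eq_zero_iff_of_nonneg
        (fun a _ => mul_nonneg (hpos a).le (sq_nonneg (X a)))).mp hV.symm a (Finset.mem_univ a)
      simpa [(hpos a).ne'] using this
    refine ⟨1, one_pos, fun n hn => ?_⟩
    simp only [hz, Finset.sum_const_zero, le_refl, if_true, htot]
    have : 0 ≤ 1 / Real.sqrt n := by positivity
    linarith
  · obtain ⟨L, C, hL, hC, hm⟩ := exists_minorant
    set c := (∑ a, P a * X a ^ 2) / 8 with hc
    have hc0 : 0 < c := by positivity
    set K := 2 * Real.exp c * Real.sqrt (Real.pi / (c / 2)) with hK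
    have hp := Real.pi_pos
    have hK0 : 0 < K := by positivity
    refine ⟨(1 + C) * K / (2 * L), by positivity, fun n hn => ?_⟩
    have hn0 : (0:ℝ) < n := by exact_mod_cast hn
    obtain ⟨b1, b2⟩ := main_bound P X hpos hsum hX hmean c hc hc0 n hn
    have hKn : 2 * Real.exp c * Real.sqrt (Real.pi / (c * n / 2)) = K / Real.sqrt n := by
      have e : Real.pi / (c * n / 2) = Real.pi / (c / 2) / n := by field_simp
      rw [hK, e, Real.sqrt_div (by positivity : 0 ≤ Real.pi / (c / 2)), mul_div_assoc]
    rw [hKn] at b1 b2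
    have h1 := (abs_le.mp b1).1
    have h2 := (abs_le.mp b2).2
    have h3 : ∑ a : Fin n → A, (∏ i, P (a i)) * (F (∑ i, X (a i)) - C * h (∑ i, X (a i))) ≤
        ∑ a : Fin n → A, (∏ i, P (a i)) * (L * (if 0 ≤ ∑ i, X (a i) then 1 else -1)) := by
      refine Finset.sum_le_sum fun a _ => ?_
      exact mul_le_mul_of_nonneg_left (hm _) (Finset.prod_nonneg fun i _ => (hpos _).le)
    have h4 : ∑ a : Fin n → A, (∏ i, P (a i)) * (F (∑ i, X (a i)) - C * h (∑ i, X (a i))) =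
        ∑ a : Fin n → A, (∏ i, P (a i)) * F (∑ i, X (a i)) -
        C * ∑ a : Fin n → A, (∏ i, P (a i)) * h (∑ i, X (a i)) := by
      rw [Finset.mul_sum, ← Finset.sum_sub_distrib]
      exact Finset.sum_congr rfl fun a _ => by ring
    have h5 : ∑ a : Fin n → A, (∏ i, P (a i)) * (L * (if 0 ≤ ∑ i, X (a i) then 1 else -1)) =
        L * (2 * (∑ a : Fin n → A, if 0 ≤ ∑ i, X (a i) then ∏ i, P (a i) else 0) - 1) := by
      conv_rhs => rw [← htot n]
      rw [Finset.mul_sum, ← Finset.sum_sub_distrib, Finset.mul_sum]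
      refine Finset.sum_congr rfl fun a _ => ?_
      split_ifs <;> ring
    rw [h4, h5] at h3
    have h6 : C * ∑ a : Fin n → A, (∏ i, P (a i)) * h (∑ i, X (a i)) ≤ C * (K / Real.sqrt n) := by
      gcongr
    set Q := ∑ a : Fin n → A, if 0 ≤ ∑ i, X (a i) then ∏ i, P (a i) else 0
    have h7 : (1 + C) * K / (2 * L) / Real.sqrt n = ((1 + C) * (K / Real.sqrt n)) / (2 * L) := by
      ring
    rw [h7, sub_le_iff_le_add, ← sub_le_iff_le_add', le_div_iff₀ (by positivity)]
    linarith

end CoreMass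

/-- **Core set has probability mass at least 1/2 − O(1/√n).** Let `χ` be a
distribution on a finite set `A` with pmf `P`, Shannon entropy
`H(χ) = −∑ a, P a · log₂ (P a)`, and let `C^{n,δ}_χ ⊆ A^n` be the core set of strings
`a` with `P_n(a) = ∏ i, P (a i) ≥ 2^{−H(χ)·n − δ·n}`. There is a constant `C > 0`
(depending only on `χ`) such that for every `n ≥ 1` and every `δ ≥ 0`,
`Pr_{k ← χ^n}[k ∈ C^{n,δ}_χ] ≥ 1/2 − C/√n`. -/
theorem core_set_mass {A : Type*} [Fintype A]
    (P : A → ℝ) (hpos : ∀ a, 0 < P a) (hle : ∀ a, P a ≤ 1)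
    (hsum : ∑ a, P a = 1) :
    ∃ C > (0 : ℝ), ∀ n : ℕ, 1 ≤ n → ∀ δ : ℝ, 0 ≤ δ →
      1 / 2 - C / Real.sqrt n ≤
        ∑ a ∈ Finset.univ.filter (fun a : Fin n → A =>
            (2 : ℝ) ^ (-((-∑ x, P x * Real.logb 2 (P x)) * n) - δ * n) ≤ ∏ i, P (a i)),
          ∏ i, P (a i) := by
  set m := ∑ x, P x * Real.logb 2 (P x) with hm
  set Y : A → ℝ := fun x => Real.logb 2 (P x) - m with hY
  set M := 1 + ∑ x, |Y x| with hM
  have hS0 : 0 ≤ ∑ x, |Y x| := Finset.sum_nonneg fun _ _ => abs_nonneg _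
  have hM0 : 0 < M := by linarith
  obtain ⟨C, hC, hmain⟩ := CoreMass.abstract P (fun x => Y x / (2 * M)) hpos hsum
    (by
      intro a
      have : |Y a| ≤ ∑ x, |Y x| :=
        Finset.single_le_sum (f := fun x => |Y x|) (fun _ _ => abs_nonneg _) (Finset.mem_univ a)
      rw [abs_div, abs_of_pos (by positivity : 0 < 2 * M), div_le_div_iff₀ (by positivity) two_pos]
      linarith)
    (by
      have : ∑ a, P a * (Y a / (2 * M)) = (∑ a, P a * Y a) / (2 * M) := by
        rw [Finset.sum_div]; exact Finset.sum_congr rfl fun a _ => by ring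
      rw [this]
      simp only [hY, mul_sub, Finset.sum_sub_distrib, ← Finset.sum_mul, hsum, ← hm]
      simp)
  refine ⟨C, hC, fun n hn δ hδ => (hmain n hn).trans ?_⟩
  rw [Finset.sum_filter]
  refine Finset.sum_le_sum fun a _ => ?_
  have hp : 0 < ∏ i, P (a i) := Finset.prod_pos fun i _ => hpos _
  by_cases h0 : 0 ≤ ∑ i, Y (a i) / (2 * M)
  · rw [if_pos h0, if_pos]
    rw [← Finset.sum_div, le_div_iff₀ (by positivity), zero_mul] at h0
    simp only [hY, Finset.sum_sub_distrib, Finset.sum_const, Finset.card_univ, Fintype.card_fin,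
      nsmul_eq_mul] at h0
    have hprod : ∏ i, P (a i) = (2:ℝ) ^ (∑ i, Real.logb 2 (P (a i))) := by
      rw [Real.rpow_sum_of_pos two_pos]
      exact Finset.prod_congr rfl fun i _ =>
        (Real.rpow_logb two_pos (by norm_num) (hpos _)).symm
    rw [hprod]
    apply Real.rpow_le_rpow_of_exponent_le one_le_two
    have : 0 ≤ δ * n := by positivity
    linarith
  · rw [if_neg h0]
    split_ifs
    · exact hp.le
    · exact le_rfl
end

section
/- Let χ be a probability distribution on a finite set A and let 0 < c < 1/2 be a constant. Then there exist γ > 0 and N₀ ∈ ℕ such that for every n ≥ N₀, every m ≥ 1, and every set S ⊆ A^n of cardinality min(2^{⌈H(χ)·n⌉}, |A|^n) consisting of most likely keys (i.e., P_n(x) ≥ P_n(y) for all x ∈ S and y ∉ S), the probability over m i.i.d. samples k_1, …, k_m ← χ^n that at least c·m of them lie in S is at least 1 − e^{−γ·m}. -/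
open scoped Classical

lemma aux_top {B : Type*} [Fintype B] (W : B → ℝ) (hW : ∀ b, 0 ≤ W b) (S T : Finset B)
    (hcard : T.card ≤ S.card) (hS : ∀ x ∈ S, ∀ y ∉ S, W y ≤ W x) :
    ∑ x ∈ T, W x ≤ ∑ x ∈ S, W x := by
  have h1 : ∑ x ∈ T \ S, W x ≤ ∑ x ∈ S \ T, W x := by
    rcases (T \ S).eq_empty_or_nonempty with h | h
    · rw [h, Finset.sum_empty]
      exact Finset.sum_nonneg fun i _ => hW i
    · obtain ⟨z, hz, hmax⟩ := Finset.exists_max_image (T \ S) W h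
      have hc : (T \ S).card ≤ (S \ T).card := Finset.card_sdiff_le_card_sdiff_iff.mpr hcard
      calc ∑ x ∈ T \ S, W x ≤ (T \ S).card • W z := Finset.sum_le_card_nsmul _ _ _ hmax
        _ ≤ (S \ T).card • W z := nsmul_le_nsmul_left (hW z) hc
        _ ≤ ∑ x ∈ S \ T, W x := Finset.card_nsmul_le_sum _ _ _ fun x hx =>
            hS x (Finset.mem_sdiff.mp hx).1 z (Finset.mem_sdiff.mp hz).2
  have h2 := Finset.sum_inter_add_sum_sdiff T S W
  have h3 := Finset.sum_inter_add_sum_sdiff S T W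
  rw [Finset.inter_comm] at h3
  linarith

lemma aux_chernoff {B : Type*} [Fintype B] (W : B → ℝ) (hW : ∀ b, 0 ≤ W b)
    (hsum : ∑ b, W b = 1) (S : Finset B) (c q : ℝ) (hcq : c < q) (hq1 : q ≤ 1) (hq0 : 0 < q)
    (hq : q ≤ ∑ b ∈ S, W b) (m : ℕ) :
    1 - Real.exp (-((q - c) ^ 2 / 2) * m) ≤
      ∑ k ∈ Finset.univ.filter (fun k : Fin m → B =>
        c * m ≤ ((Finset.univ.filter (fun j => k j ∈ S)).card : ℝ)), ∏ j, W (k j) := by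
  set t := q - c with ht
  have htpos : 0 < t := by simp [ht, hcq]
  have htot : ∑ k : Fin m → B, ∏ j, W (k j) = 1 := by
    rw [← Fintype.sum_pow, hsum, one_pow]
  rw [← Finset.sum_filter_add_sum_filter_not Finset.univ (fun k : Fin m → B =>
        c * m ≤ ((Finset.univ.filter (fun j => k j ∈ S)).card : ℝ))] at htot
  suffices h : ∑ k ∈ Finset.univ.filter (fun k : Fin m → B =>
        ¬ c * m ≤ ((Finset.univ.filter (fun j => k j ∈ S)).card : ℝ)), ∏ j, W (k j)
        ≤ Real.exp (-(t ^ 2 / 2) * m) by linarith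
  have hbase : ∑ b, W b * (if b ∈ S then Real.exp (-t) else 1)
      ≤ Real.exp (-(q * (t - t ^ 2 / 2))) := by
    have e1 : ∑ b, W b * (if b ∈ S then Real.exp (-t) else 1)
        = 1 - (1 - Real.exp (-t)) * ∑ b ∈ S, W b := by
      have : ∀ b, W b * (if b ∈ S then Real.exp (-t) else 1)
          = W b - (1 - Real.exp (-t)) * (if b ∈ S then W b else 0) := by
        intro b; split_ifs <;> ring
      simp_rw [this]
      rw [Finset.sum_sub_distrib, hsum, ← Finset.mul_sum]
      simp
    have e2 : Real.exp (-t) ≤ 1 - t + t ^ 2 / 2 := by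
      have h1 := Real.quadratic_le_exp_of_nonneg htpos.le
      have h2 : Real.exp (-t) * Real.exp t = 1 := by rw [← Real.exp_add]; simp
      have h3 : 0 < 1 - t + t ^ 2 / 2 := by nlinarith [sq_nonneg (t - 1)]
      have h4 : 1 ≤ (1 - t + t ^ 2 / 2) * Real.exp t := by
        calc (1 : ℝ) ≤ (1 - t + t ^ 2 / 2) * (1 + t + t ^ 2 / 2) := by nlinarith [sq_nonneg (t ^ 2)]
          _ ≤ _ := by gcongr
      exact le_of_mul_le_mul_right (h2.le.trans h4) (Real.exp_pos t)
    have e3 : Real.exp (-t) ≤ 1 := by rw [Real.exp_le_one_iff]; linarith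
    rw [e1]
    have := Real.add_one_le_exp (-(q * (t - t ^ 2 / 2)))
    nlinarith
  have key : ∀ k : Fin m → B, Real.exp (t * (c * m)) *
      ∏ j, (W (k j) * (if k j ∈ S then Real.exp (-t) else 1)) =
      (∏ j, W (k j)) * Real.exp (t * (c * m - ((Finset.univ.filter (fun j => k j ∈ S)).card : ℝ))) := by
    intro k
    rw [Finset.prod_mul_distrib, Finset.prod_ite, Finset.prod_const, Finset.prod_const_one, mul_one,
      ← Real.exp_nat_mul, mul_left_comm, ← Real.exp_add]
    congr 2; ring
  calc _ ≤ ∑ k ∈ Finset.univ.filter (fun k : Fin m → B =>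
        ¬ c * m ≤ ((Finset.univ.filter (fun j => k j ∈ S)).card : ℝ)), (Real.exp (t * (c * m)) *
      ∏ j, (W (k j) * (if k j ∈ S then Real.exp (-t) else 1))) := by
        refine Finset.sum_le_sum fun k hk => ?_
        rw [key]
        refine le_mul_of_one_le_right (Finset.prod_nonneg fun _ _ => hW _) ?_
        rw [Real.one_le_exp_iff]
        have := (Finset.mem_filter.mp hk).2
        rw [not_le] at this
        exact mul_nonneg htpos.le (by linarith)
    _ ≤ ∑ k : Fin m → B, (Real.exp (t * (c * m)) *
      ∏ j, (W (k j) * (if k j ∈ S then Real.exp (-t) else 1))) := by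
        refine Finset.sum_le_sum_of_subset_of_nonneg (Finset.subset_univ _) fun k _ _ => ?_
        refine mul_nonneg (Real.exp_pos _).le (Finset.prod_nonneg fun j _ => mul_nonneg (hW _) ?_)
        split_ifs <;> positivity
    _ = Real.exp (t * (c * m)) * (∑ b, W b * (if b ∈ S then Real.exp (-t) else 1)) ^ m := by
        rw [Fintype.sum_pow, Finset.mul_sum]
    _ ≤ Real.exp (t * (c * m)) * (Real.exp (-(q * (t - t ^ 2 / 2)))) ^ m := by
        gcongr
        refine Finset.sum_nonneg fun b _ => mul_nonneg (hW _) ?_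
        split_ifs <;> positivity
    _ ≤ _ := by
        rw [← Real.exp_nat_mul, ← Real.exp_add]
        apply Real.exp_le_exp.mpr
        have : t * c - q * (t - t ^ 2 / 2) ≤ - (t ^ 2 / 2) := by
          have hc : c = q - t := by simp [ht]
          rw [hc]; nlinarith [sq_nonneg t]
        have hm : (0 : ℝ) ≤ m := by positivity
        nlinarith

open MeasureTheory ProbabilityTheory Filter Topology in
lemma aux_gauss (v : NNReal) : (1 / 2 : ℝ) ≤ (gaussianReal 0 v).real (Set.Iic 0) := by
  have h : (gaussianReal 0 v).map (fun x => -x) = gaussianReal 0 v := by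
    rw [gaussianReal_map_neg]; simp
  have h2 : (gaussianReal 0 v).real (Set.Ici 0) = (gaussianReal 0 v).real (Set.Iic 0) := by
    conv_rhs => rw [← h]
    rw [map_measureReal_apply (by fun_prop) measurableSet_Iic]
    congr 1; ext x; simp
  have h3 : (gaussianReal 0 v).real (Set.Iic 0 ∪ Set.Ici 0) ≤ _ := measureReal_union_le _ _
  rw [Set.Iic_union_Ici] at h3
  simp at h3
  linarith

open MeasureTheory ProbabilityTheory Filter Topology in
lemma aux_clt {A : Type*} [Fintype A]
    (P : A → ℝ) (hpos : ∀ a, 0 < P a) (hsum : ∑ a, P a = 1) (f : A → ℝ)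
    (c : ℝ) (hc : c < 1 / 2) :
    ∃ N₀ : ℕ, ∀ n ≥ N₀,
      c < ∑ x ∈ Finset.univ.filter (fun x : Fin n → A => ∑ i, f (x i) ≤ n * ∑ a, P a * f a),
        ∏ i, P (x i) := by
  let : MeasurableSpace A := ⊤
  have : DiscreteMeasurableSpace A := ⟨fun _ => trivial⟩
  let μ : Measure A := ∑ a, ENNReal.ofReal (P a) • Measure.dirac a
  have hμ1 : ∀ a, μ {a} = ENNReal.ofReal (P a) := by
    intro a
    simp [μ, Measure.finsetSum_apply, Set.indicator_apply]
  have : IsProbabilityMeasure μ := ⟨by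
    simp [μ, Measure.finsetSum_apply]
    rw [← ENNReal.ofReal_sum_of_nonneg (fun a _ => (hpos a).le), hsum, ENNReal.ofReal_one]⟩
  have hμr : ∀ a, μ.real {a} = P a := fun a => by
    rw [measureReal_def, hμ1, ENNReal.toReal_ofReal (hpos a).le]
  have hint : ∀ g : A → ℝ, ∫ a, g a ∂μ = ∑ a, P a * g a := by
    intro g
    rw [integral_fintype (Integrable.of_finite)]
    simp [hμr]
  let Q : Measure (ℕ → A) := Measure.infinitePi (fun _ => μ)
  let X : ℕ → (ℕ → A) → ℝ := fun k ω => f (ω k)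
  have hev : ∀ k, MeasurePreserving (fun ω : ℕ → A => ω k) Q μ :=
    fun k => measurePreserving_eval_infinitePi (fun _ => μ) k
  have hindE : iIndepFun (fun (k : ℕ) (ω : ℕ → A) => ω k) Q := by
    exact iIndepFun_infinitePi (P := fun _ => μ) (X := fun _ a => a) (fun _ => measurable_id)
  have hf : Measurable f := measurable_from_top
  have hind : iIndepFun X Q := hindE.comp (fun _ => f) (fun _ => hf)
  have hmap : ∀ k, Q.map (X k) = μ.map f := fun k => by
    rw [← (hev k).map_eq, Measure.map_map hf (hev k).measurable]; rfl
  have hXm : ∀ k, Measurable (X k) := fun k => hf.comp (hev k).measurable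
  have hident : ∀ k, IdentDistrib (X k) (X 0) Q Q := fun k =>
    ⟨(hXm k).aemeasurable, (hXm 0).aemeasurable, by rw [hmap, hmap]⟩
  have hL2 : MemLp (X 0) 2 Q := by
    have : MemLp f 2 μ := MemLp.of_discrete
    exact this.comp_measurePreserving (hev 0)
  have hmean : Q[X 0] = ∑ a, P a * f a := by
    rw [← hint, ← (hev 0).map_eq, integral_map (hev 0).measurable.aemeasurable
      hf.aestronglyMeasurable]
  -- finite-dimensional law
  have hfin : ∀ n : ℕ, ∀ T : Finset (Fin n → A),
      Q.real {ω | (fun i : Fin n => ω i) ∈ T} = ∑ x ∈ T, ∏ i, P (x i) := by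
    intro n T
    have hm : Measurable (fun (ω : ℕ → A) (i : Fin n) => ω i) := by fun_prop
    have h1 : Q.map (fun (ω : ℕ → A) (i : Fin n) => ω i) = Measure.pi (fun _ => μ) := by
      have := hindE.precomp (g := fun i : Fin n => (i : ℕ)) Fin.val_injective
      rw [iIndepFun_iff_map_fun_eq_pi_map (fun i : Fin n => (hev i).measurable.aemeasurable)] at this
      rw [this]
      congr 1; ext1 i; exact (hev i).map_eq
    have h2 : Q.real {ω | (fun i : Fin n => ω i) ∈ T} = (Measure.pi (fun _ : Fin n => μ)).real T := by
      rw [← h1, map_measureReal_apply hm T.measurableSet]; rfl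
    rw [h2, ← sum_measureReal_singleton]
    refine Finset.sum_congr rfl fun x _ => ?_
    rw [measureReal_def, Measure.pi_singleton, ENNReal.toReal_prod]
    exact Finset.prod_congr rfl fun i _ => hμr _
  have hset : ∀ n : ℕ, Q.real {ω | ∑ k ∈ Finset.range n, X k ω ≤ n * Q[X 0]} =
      ∑ x ∈ Finset.univ.filter (fun x : Fin n → A => ∑ i, f (x i) ≤ n * ∑ a, P a * f a),
        ∏ i, P (x i) := by
    intro n
    rw [← hfin, hmean]
    congr 1; ext ω
    simp [X, Finset.sum_range]
  simp_rw [← hset]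
  by_cases hv : Var[X 0; Q] = 0
  · refine ⟨0, fun n _ => ?_⟩
    have hae : ∀ᵐ ω ∂Q, ∀ k, X k ω = Q[X 0] := by
      refine ae_all_iff.2 fun k => ?_
      have := ae_eq_integral_of_variance_eq_zero ((hident k).memLp_iff.2 hL2)
        (by rw [(hident k).variance_eq, hv])
      rwa [(hident k).integral_eq] at this
    have : Q.real {ω | ∑ k ∈ Finset.range n, X k ω ≤ n * Q[X 0]} = 1 := by
      have hu : {ω | ∑ k ∈ Finset.range n, X k ω ≤ n * Q[X 0]} =ᵐ[Q] Set.univ := by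
        rw [eventuallyEq_univ]
        filter_upwards [hae] with ω hω
        simp [hω]
      rw [measureReal_congr hu]
      simp
    linarith
  · have hclt := tendstoInDistribution_inv_sqrt_mul_sum_sub (Y := id)
      (P' := gaussianReal 0 Var[X 0; Q].toNNReal) HasLaw.id hL2 hind hident
    have hv' : Var[X 0; Q].toNNReal ≠ 0 := by
      simpa using lt_of_le_of_ne (variance_nonneg _ _) (Ne.symm hv)
    have := nullSingletonClass_gaussianReal (μ := 0) hv'
    have hlim := ProbabilityMeasure.tendsto_measure_of_null_frontier_of_tendsto' hclt.tendsto
      (E := Set.Iic 0) (by simp)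
    simp only [ProbabilityMeasure.coe_mk, Measure.map_id] at hlim
    have hlim2 := (ENNReal.tendsto_toReal (measure_ne_top _ _)).comp hlim
    have hev2 := hlim2.eventually (lt_mem_nhds (a := c) (lt_of_lt_of_le hc (aux_gauss _)))
    obtain ⟨N, hN⟩ := eventually_atTop.mp hev2
    refine ⟨N + 1, fun n hn => ?_⟩
    have := hN n (by omega)
    simp only [Function.comp] at this
    rw [Measure.map_apply_of_aemeasurable (hclt.forall_aemeasurable n) measurableSet_Iic] at this
    have hn0 : 0 < (√(n : ℝ))⁻¹ := by
      have : (0 : ℝ) < n := by exact_mod_cast (by omega : 0 < n)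
      positivity
    have hseteq : {ω | ∑ k ∈ Finset.range n, X k ω ≤ n * Q[X 0]} =
        (fun ω ↦ (√(n : ℝ))⁻¹ * (∑ k ∈ Finset.range n, X k ω - n * Q[X 0])) ⁻¹' Set.Iic 0 := by
      ext ω
      simp only [Set.mem_ofPred_eq, Set.mem_preimage, Set.mem_Iic]
      rw [← sub_nonpos]
      exact ⟨fun h => mul_nonpos_of_nonneg_of_nonpos hn0.le h,
        fun h => nonpos_of_mul_nonpos_right h hn0⟩
    rw [hseteq]
    exact this

/-- **Multi-key guessing, fraction `c < 1/2`.** Let `χ` be a distribution on a finite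
set `A` with pmf `P` and Shannon entropy `H(χ) = −∑ a, P a · log₂ (P a)`, and let
`0 < c < 1/2`. Then there are `γ > 0` and `N₀` such that for all `n ≥ N₀`, all
`m ≥ 1`, and every set `S ⊆ A^n` of cardinality `min(2^⌈H(χ)·n⌉, |A|^n)` consisting
of most likely keys (i.e. `P_n x ≥ P_n y` for `x ∈ S`, `y ∉ S`), the probability over
`m` i.i.d. samples from `χ^n` that at least `c·m` of them lie in `S` is at least
`1 − e^{−γ·m}`. -/
theorem multikey_guessing_small_fraction {A : Type*} [Fintype A]
    (P : A → ℝ) (hpos : ∀ a, 0 < P a) (hle : ∀ a, P a ≤ 1)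
    (hsum : ∑ a, P a = 1)
    (c : ℝ) (hc0 : 0 < c) (hc : c < 1 / 2) :
    ∃ γ > (0 : ℝ), ∃ N₀ : ℕ, ∀ n ≥ N₀, ∀ m : ℕ, 1 ≤ m →
      ∀ S : Finset (Fin n → A),
        S.card = min (2 ^ ⌈(-∑ x, P x * Real.logb 2 (P x)) * n⌉₊) (Fintype.card A ^ n) →
        (∀ x ∈ S, ∀ y ∉ S, (∏ i, P (y i)) ≤ ∏ i, P (x i)) →
        1 - Real.exp (-γ * m) ≤
          ∑ k ∈ Finset.univ.filter (fun k : Fin m → Fin n → A =>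
              c * m ≤ ((Finset.univ.filter (fun j => k j ∈ S)).card : ℝ)),
            ∏ j, ∏ i, P (k j i) := by
  have hW1 : ∀ n, ∑ x : Fin n → A, ∏ i, P (x i) = 1 := fun n => by
    rw [← Fintype.sum_pow, hsum, one_pow]
  have hW0 : ∀ n, ∀ x : Fin n → A, 0 < ∏ i, P (x i) := fun n x =>
    Finset.prod_pos fun i _ => hpos _
  set q : ℝ := (c + 1 / 2) / 2 with hq
  obtain ⟨N₀, hN⟩ := aux_clt P hpos hsum (fun a => -Real.logb 2 (P a)) q (by rw [hq]; linarith)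
  refine ⟨(q - c) ^ 2 / 2, ?_, N₀, fun n hn m _ S hcard hS => ?_⟩
  · have : 0 < q - c := by rw [hq]; linarith
    positivity
  have h1 := hN n hn
  set T := Finset.univ.filter (fun x : Fin n → A =>
    ∑ i, -Real.logb 2 (P (x i)) ≤ n * ∑ a, P a * -Real.logb 2 (P a)) with hT
  set H := -∑ x, P x * Real.logb 2 (P x) with hH
  have hHe : ∑ a, P a * -Real.logb 2 (P a) = H := by simp [hH]
  have hTS : T.card ≤ S.card := by
    rw [hcard]
    refine le_min ?_ ?_
    · have hx : ∀ x ∈ T, (2 : ℝ) ^ (-(H * n)) ≤ ∏ i, P (x i) := by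
        intro x hx
        have h2 := (Finset.mem_filter.mp hx).2
        rw [hHe] at h2
        rw [← Real.rpow_logb two_pos (by norm_num) (hW0 n x)]
        apply Real.rpow_le_rpow_of_exponent_le one_le_two
        rw [Real.logb_prod _ _ (fun i _ => (hpos _).ne')]
        rw [Finset.sum_neg_distrib] at h2
        linarith
      have h3 := Finset.card_nsmul_le_sum T _ _ hx
      have h4 : ∑ x ∈ T, ∏ i, P (x i) ≤ 1 := by
        rw [← hW1 n]
        exact Finset.sum_le_sum_of_subset_of_nonneg (Finset.subset_univ _)
          fun x _ _ => (hW0 n x).le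
      have h5 : (T.card : ℝ) ≤ 2 ^ (H * n) := by
        rw [nsmul_eq_mul, Real.rpow_neg two_pos.le, ← div_eq_mul_inv] at h3
        have := h3.trans h4
        rwa [div_le_one (by positivity)] at this
      have h6 : (2 : ℝ) ^ (H * n) ≤ 2 ^ ⌈H * n⌉₊ := by
        rw [← Real.rpow_natCast]
        exact Real.rpow_le_rpow_of_exponent_le one_le_two (Nat.le_ceil _)
      exact_mod_cast h5.trans h6
    · calc T.card ≤ Fintype.card (Fin n → A) := Finset.card_le_univ _
        _ = _ := by simp
  have h7 := aux_top (fun x : Fin n → A => ∏ i, P (x i)) (fun x => (hW0 n x).le) S T hTS hS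
  have h8 := aux_chernoff (fun x : Fin n → A => ∏ i, P (x i)) (fun x => (hW0 n x).le) (hW1 n) S c q
    (by rw [hq]; linarith) (by rw [hq]; linarith) (by rw [hq]; linarith) (h1.le.trans h7) m
  refine h8.trans (le_of_eq ?_)
  refine Finset.sum_congr ?_ fun _ _ => rfl
  ext k
  simp only [Finset.mem_filter, Finset.mem_univ, true_and]
  rw [iff_iff_eq]
  congr!
end
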